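/- Let F_n be the n×n free discrete Schrödinger matrix with eigenvalues λ_1 < ... < λ_n, and let S_n be the discrete Schrödinger matrix with diagonal b_1, b_2, 0, ..., 0 with eigenvalues μ_1 ≤ ... ≤ μ_n. If μ_k = λ_k and μ_{k+1} = λ_{k+1} for some k ∈ {1,...,n-1}, then b_1 = b_2 = 0, i.e. S_n = F_n. -/

import Mathlib

open Polynomial Matrix

/-- The `m × m` free discrete Schrödinger matrix. -/
def freeSchrodinger (m : ℕ) : Matrix (Fin m) (Fin m) ℝ :=
  Matrix.of fun i j : Fin m =>
    if i = j then 0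
    else if (i : ℕ) + 1 = (j : ℕ) ∨ (j : ℕ) + 1 = (i : ℕ) then 1 else 0

noncomputable def triX (n : ℕ) (d : ℕ → ℝ) : Matrix (Fin n) (Fin n) ℝ[X] :=
  Matrix.of fun i j : Fin n =>
    if i = j then X - C (d i)
    else if (i : ℕ) + 1 = (j : ℕ) ∨ (j : ℕ) + 1 = (i : ℕ) then -1 else 0

theorem triX_succ (n : ℕ) (d : ℕ → ℝ) :
    (triX (n+1) d).submatrix Fin.succ Fin.succ = triX n (fun i => d (i+1)) := by
  ext1 i j
  simp [triX, Fin.ext_iff]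

theorem triX_det (n : ℕ) (d : ℕ → ℝ) :
    (triX (n+2) d).det = (X - C (d 0)) * (triX (n+1) (fun i => d (i+1))).det
      - (triX n (fun i => d (i+2))).det := by
  rw [Matrix.det_succ_row_zero, Fin.sum_univ_succ, Fin.sum_univ_succ]
  have hz : ∀ i : Fin n, triX (n+2) d 0 i.succ.succ = 0 := by
    intro i; simp [triX, Fin.ext_iff]
  have h0 : triX (n+2) d 0 0 = X - C (d 0) := by simp [triX]
  have h1 : triX (n+2) d 0 (Fin.succ 0) = -1 := by simp [triX, Fin.ext_iff]
  have hm : ((triX (n+2) d).submatrix Fin.succ (Fin.succAbove (Fin.succ 0))).det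
      = - (triX n (fun i => d (i+2))).det := by
    rw [Matrix.det_succ_column_zero, Fin.sum_univ_succ]
    have e0 : (triX (n+2) d).submatrix Fin.succ (Fin.succAbove (Fin.succ 0)) 0 0 = -1 := by
      simp [triX, Fin.ext_iff]
    have ez : ∀ i : Fin n, (triX (n+2) d).submatrix Fin.succ (Fin.succAbove (Fin.succ 0)) i.succ 0 = 0 := by
      intro i; simp [triX, Fin.ext_iff]
    have es : (((triX (n+2) d).submatrix Fin.succ (Fin.succAbove (Fin.succ 0))).submatrix
        (Fin.succAbove 0) Fin.succ) = triX n (fun i => d (i+2)) := by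
      ext1 i j
      have e : (Fin.succAbove (Fin.succ 0) j.succ : Fin (n+2)) = j.succ.succ := by
        rw [Fin.succ_succAbove_succ]; simp
      simp only [Matrix.submatrix_apply, e]
      simp [triX, Fin.ext_iff]
    rw [es, e0]
    simp only [ez]
    simp
  simp only [hz, h0, h1, hm]
  have hs : (triX (n+2) d).submatrix Fin.succ (Fin.succAbove 0) = triX (n+1) (fun i => d (i+1)) := by
    rw [← triX_succ]; rfl
  rw [hs]
  simp
  ring

/-- free characteristic polynomials -/
noncomputable def fp (n : ℕ) : ℝ[X] := (triX n (fun _ => 0)).det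

theorem fp_zero : fp 0 = 1 := by simp [fp]
theorem fp_one : fp 1 = X := by simp [fp, triX]
theorem fp_rec (n : ℕ) : fp (n+2) = X * fp (n+1) - fp n := by
  unfold fp; rw [triX_det]; simp

theorem free_charpoly (n : ℕ) : (freeSchrodinger n).charpoly = fp n := by
  unfold Matrix.charpoly fp
  congr 1
  ext1 i j
  by_cases h : i = j
  · subst h; simp [triX, freeSchrodinger]
  · rw [Matrix.charmatrix_apply_ne _ _ _ h]
    simp only [triX, freeSchrodinger, Matrix.of_apply, if_neg h]
    split_ifs <;> simp

theorem one_det (m : ℕ) (d : ℕ → ℝ) (hd : ∀ i, d (i+1) = 0) :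
    (triX (m+1) d).det = fp (m+1) - C (d 0) * fp m := by
  cases m with
  | zero => simp [fp_one, fp_zero, triX]
  | succ m =>
    rw [triX_det, fp_rec]
    have e1 : (fun i => d (i+1)) = fun _ => (0:ℝ) := funext hd
    have e2 : (fun i => d (i+2)) = fun _ => (0:ℝ) := funext fun i => hd (i+1)
    rw [e1, e2]
    change (X - C (d 0)) * fp (m+1) - fp m = _
    ring

theorem S_charpoly (m : ℕ) (b₁ b₂ : ℝ) (S : Matrix (Fin (m+2)) (Fin (m+2)) ℝ)
    (hS : S = Matrix.of fun i j : Fin (m+2) =>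
      if i = j then (if (i : ℕ) = 0 then b₁ else if (i : ℕ) = 1 then b₂ else 0)
      else if (i : ℕ) + 1 = (j : ℕ) ∨ (j : ℕ) + 1 = (i : ℕ) then 1 else 0) :
    S.charpoly = fp (m+2) * (1 + C b₂ * (X - C b₁))
      - fp (m+1) * (C b₁ + C b₂ * X * (X - C b₁)) := by
  have h : S.charpoly = (triX (m+2) (fun i => if i = 0 then b₁ else if i = 1 then b₂ else 0)).det := by
    unfold Matrix.charpoly
    congr 1
    ext1 i j
    subst hS
    by_cases h : i = j
    · subst h; simp [triX]
    · rw [Matrix.charmatrix_apply_ne _ _ _ h]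
      simp only [triX, Matrix.of_apply, if_neg h]
      split_ifs <;> simp
  rw [h, triX_det, one_det _ _ (by intro i; simp)]
  have e2 : (fun i : ℕ => if i + 2 = 0 then b₁ else if i + 2 = 1 then b₂ else 0) = fun _ => (0:ℝ) := by
    funext i; simp
  rw [e2]
  change _ - fp m = _
  rw [fp_rec]
  simp
  ring

theorem wronsk (m : ℕ) (x : ℝ) :
    1 ≤ (fp (m+1)).derivative.eval x * (fp m).eval x - (fp (m+1)).eval x * (fp m).derivative.eval x := by
  induction m with
  | zero => simp [fp_zero, fp_one]
  | succ m ih =>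
    rw [fp_rec]
    simp only [derivative_sub, derivative_mul, derivative_X, eval_sub, eval_mul, eval_add, eval_X, eval_one]
    nlinarith [sq_nonneg ((fp (m+1)).eval x)]

theorem wronsk2 (m : ℕ) (x : ℝ) (hx : (fp (m+2)).eval x = 0) :
    ((fp (m+1)).eval x)^2 + 1 ≤ (fp (m+2)).derivative.eval x * (fp (m+1)).eval x := by
  have ih := wronsk m x
  rw [fp_rec] at hx ⊢
  simp only [derivative_sub, derivative_mul, derivative_X, eval_sub, eval_mul, eval_add, eval_X, eval_one] at hx ⊢
  have : (fp m).eval x = x * (fp (m+1)).eval x := by linarith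
  rw [this] at ih
  nlinarith

theorem fp_neg (n : ℕ) (x : ℝ) : (fp n).eval (-x) = (-1)^n * (fp n).eval x ∧
    (fp (n+1)).eval (-x) = (-1)^(n+1) * (fp (n+1)).eval x := by
  induction n with
  | zero => simp [fp_zero, fp_one]
  | succ n ih =>
    refine ⟨ih.2, ?_⟩
    rw [fp_rec]
    simp only [eval_sub, eval_mul, eval_X, ih.1, ih.2]
    ring

theorem deriv_prod (n : ℕ) (l : Fin n → ℝ) (k : Fin n) :
    (derivative (∏ i, (X - C (l i)))).eval (l k) = ∏ i ∈ Finset.univ.erase k, (l k - l i) := by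
  rw [← Finset.mul_prod_erase Finset.univ _ (Finset.mem_univ k), derivative_mul]
  simp [eval_prod]

theorem ambarzumian_mixed (n : ℕ) (b₁ b₂ : ℝ)
    (S : Matrix (Fin n) (Fin n) ℝ)
    (hS : S = Matrix.of fun i j : Fin n =>
      if i = j then (if (i : ℕ) = 0 then b₁ else if (i : ℕ) = 1 then b₂ else 0)
      else if (i : ℕ) + 1 = (j : ℕ) ∨ (j : ℕ) + 1 = (i : ℕ) then 1 else 0)
    (lam : Fin n → ℝ) (hlam : StrictMono lam)
    (hcharF : (freeSchrodinger n).charpoly = ∏ i, (X - C (lam i)))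
    (mu : Fin n → ℝ) (hmu : Monotone mu)
    (hcharS : S.charpoly = ∏ i, (X - C (mu i)))
    (k : ℕ) (hk : k + 1 < n)
    (h1 : mu ⟨k, by omega⟩ = lam ⟨k, by omega⟩)
    (h2 : mu ⟨k + 1, hk⟩ = lam ⟨k + 1, hk⟩) :
    b₁ = 0 ∧ b₂ = 0 ∧ S = freeSchrodinger n := by
  suffices hb : b₁ = 0 ∧ b₂ = 0 by
    refine ⟨hb.1, hb.2, ?_⟩
    rw [hS, hb.1, hb.2]
    ext i j
    simp [freeSchrodinger]
  obtain ⟨m, rfl⟩ : ∃ m, n = m + 2 := ⟨n - 2, by omega⟩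
  rw [free_charpoly] at hcharF
  have hq := S_charpoly m b₁ b₂ S hS
  -- roots
  have rootF : ∀ i, (fp (m+2)).eval (lam i) = 0 := by
    intro i
    rw [hcharF, eval_prod]
    exact Finset.prod_eq_zero (Finset.mem_univ i) (by simp)
  have rootF' : ∀ x, (fp (m+2)).eval x = 0 → ∃ i, x = lam i := by
    intro x hx
    rw [hcharF, eval_prod, Finset.prod_eq_zero_iff] at hx
    obtain ⟨i, -, hi⟩ := hx
    exact ⟨i, by simpa [sub_eq_zero] using hi⟩
  have rootS : ∀ i, (S.charpoly).eval (mu i) = 0 := by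
    intro i
    rw [hcharS, eval_prod]
    exact Finset.prod_eq_zero (Finset.mem_univ i) (by simp)
  have quad : ∀ i, mu i = lam i → b₁ + b₂ * lam i * (lam i - b₁) = 0 := by
    intro i hi
    have h := rootS i
    have w := wronsk2 m (lam i) (rootF i)
    rw [hq, hi] at h
    simp only [eval_sub, eval_mul, eval_add, eval_X, eval_one, eval_C, rootF i] at h
    have hB : (fp (m+1)).eval (lam i) ≠ 0 := by
      intro h0; rw [h0] at w; norm_num at w
    have : (fp (m+1)).eval (lam i) * (b₁ + b₂ * lam i * (lam i - b₁)) = 0 := by linarith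
    exact (mul_eq_zero.mp this).resolve_left hB
  have qa := quad _ h1
  have qb := quad _ h2
  have hsign : 0 ≤ (derivative S.charpoly).eval (lam ⟨k, by omega⟩) *
      (derivative (fp (m+2))).eval (lam ⟨k, by omega⟩) := by
    rw [hcharF, deriv_prod, ← h1, hcharS, deriv_prod, ← Finset.prod_mul_distrib]
    apply Finset.prod_nonneg
    intro i _
    rw [h1]
    rw [← h1]
    rcases le_total i ⟨k, by omega⟩ with h | h
    · have e1 := hmu h
      have e2 := hlam.monotone h
      rw [← h1] at e2
      exact mul_nonneg (by linarith) (by linarith)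
    · have e1 := hmu h
      have e2 := hlam.monotone h
      rw [← h1] at e2
      exact mul_nonneg_of_nonpos_of_nonpos (by linarith) (by linarith)
  have w := wronsk2 m _ (rootF ⟨k, by omega⟩)
  have hab : lam ⟨k, by omega⟩ < lam ⟨k+1, hk⟩ := hlam (by simp [Fin.lt_def])
  have sym : lam ⟨k, by omega⟩ < 0 → 0 < lam ⟨k+1, hk⟩ →
      lam ⟨k+1, hk⟩ = - lam ⟨k, by omega⟩ := by
    intro ha hb
    obtain ⟨i, hi⟩ := rootF' (- lam ⟨k, by omega⟩) (by rw [(fp_neg _ _).1, rootF, mul_zero])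
    obtain ⟨j, hj⟩ := rootF' (- lam ⟨k+1, hk⟩) (by rw [(fp_neg _ _).1, rootF, mul_zero])
    have i1 : (⟨k, by omega⟩ : Fin (m+2)) < i := hlam.lt_iff_lt.mp (by linarith)
    have j1 : j < (⟨k+1, hk⟩ : Fin (m+2)) := hlam.lt_iff_lt.mp (by linarith)
    have i2 : (⟨k+1, hk⟩ : Fin (m+2)) ≤ i := by
      simp only [Fin.lt_def, Fin.le_def] at *; omega
    have j2 : j ≤ (⟨k, by omega⟩ : Fin (m+2)) := by
      simp only [Fin.lt_def, Fin.le_def] at *; omega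
    have i3 := hlam.monotone i2
    have j3 := hlam.monotone j2
    linarith
  have hF0 := rootF ⟨k, by omega⟩
  rw [hq] at hsign
  simp only [derivative_sub, derivative_mul, derivative_add, derivative_X, derivative_one,
    derivative_C, eval_sub, eval_mul, eval_add, eval_X, eval_one, eval_C, eval_zero, hF0] at hsign
  generalize lam ⟨k, by omega⟩ = a at *
  generalize lam ⟨k+1, hk⟩ = b at *
  generalize (derivative (fp (m+2))).eval a = D at *
  generalize (fp (m+1)).eval a = B at *
  by_cases hb2 : b₂ = 0
  · subst hb2; constructor <;> linarith
  exfalso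
  have hs : b₁ = a + b := by
    have : b₂ * (b - a) * (a + b - b₁) = 0 := by linear_combination qb - qa
    have h3 : b - a ≠ 0 := by linarith
    have := (mul_eq_zero.mp this).resolve_left (mul_ne_zero hb2 h3)
    linarith
  have hP : b₂ * (a * b) = a + b := by rw [hs] at qa; linear_combination -qa
  have hsum : a + b ≠ 0 := by
    intro h0
    rw [h0] at hP
    have := (mul_eq_zero.mp hP).resolve_left hb2
    have hb' : b = -a := by linarith
    subst hb'
    have : a = 0 := by nlinarith
    subst this; simp at hab
  have hP0 : a * b ≠ 0 := by intro h0; rw [h0] at hP; apply hsum; linarith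
  have hpos : 0 < a * b := by
    by_contra hneg
    have hneg : a * b < 0 := lt_of_le_of_ne (not_lt.mp hneg) hP0
    rcases mul_neg_iff.mp hneg with h | h
    · linarith
    · exact hsum (by linarith [sym h.1 h.2])
  subst hs
  have hs2 : 0 ≤ a * b * (D * D * (1 - b₂ * b)) + a * b * (b₂ * (b-a) * B * D) := by
    have := mul_nonneg hpos.le hsign
    refine this.trans (le_of_eq ?_)
    linear_combination (-a*b*D*((fp (m+1)).derivative.eval a)) * qa
  have hs3 : 0 ≤ - (b^2 * D^2) + (b^2 - a^2) * (B * D) := by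
    refine hs2.trans (le_of_eq ?_)
    linear_combination (-b * D^2 + (b-a)*B*D) * hP
  have k1 : 0 < (D - B) * B := by nlinarith
  have k2 : 0 < (D - B) * D := by nlinarith [sq_nonneg (D-B)]
  have k3 : 0 < B * D := by nlinarith [sq_nonneg B]
  have hb0 : b ≠ 0 := right_ne_zero_of_mul hP0
  have := mul_pos (sq_pos_of_ne_zero hb0) k2
  nlinarith [mul_nonneg (sq_nonneg a) k3.le]
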